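/- Assume f : [0,1]×ℝ×ℝ → ℝ is continuous and let r > 0. Then the family { Zx : x ∈ C¹([0,1],ℝ), x(0) = x(1) = 0, ‖x‖ ≤ r } is uniformly equicontinuous on [0,1]: for every ε > 0 there exists δ > 0 such that for every continuously differentiable x : [0,1] → ℝ with x(0) = x(1) = 0 and ‖x‖ ≤ r, and all t₁, t₂ ∈ [0,1] with |t₂ − t₁| < δ, one has |(Zx)(t₂) − (Zx)(t₁)| < ε, where (Zx)(t) = ∫₀¹ G(t,s)·f(s, x(s), x'(s)) ds + ∫₀¹ H(t,s)·x(s) ds. -/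

import Mathlib

/-!
The operator splits into the nonlinear part, with kernel `GreenG`, and the linear part, with kernel
`GreenH`.

The exponents in `GreenG` are positive, so `GreenG` is jointly continuous, hence uniformly
continuous on the unit square. Since `f` is bounded on `[0,1] × [-r,r]²`, the nonlinear part is
equicontinuous (`greenG_part`).

The kernel `GreenH` is singular. Expanding it, the linear part is a combination of the
fractional integral `∫₀ᵗ (t - s) ^ (α - 1) x s ds` and of two fixed integrals with coefficients
continuous in `t`. The bound `|x'| ≤ r` makes `x` `r`-Lipschitz. After the substitution
`u = t - s` the fractional integral becomes the convolution of `u ^ (α - 1)` with the extension of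
`x` by zero, so it is Lipschitz in `t` with constant `r / α` (`fracIntegral_lipschitz`). The fixed
integrals are at most `r / α` in absolute value; for the nonintegrable kernel `(1 - s) ^ (α - 2)`
this rests on `x 1 = 0`, which gives `|x s| ≤ r (1 - s)` (`greenH_bound`).
-/

open Set intervalIntegral

noncomputable def GreenG (α β : ℝ) (t s : ℝ) : ℝ :=
  (1 / Real.Gamma (α + β)) *
    ((if s ≤ t then (t - s) ^ (α + β - 1) else 0)
      + ((α + 1) * t ^ (α + 2) - (α + 2) * t ^ (α + 1)) * (1 - s) ^ (α + β - 1)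
      + (α + β - 1) * (t ^ (α + 1) - t ^ (α + 2)) * (1 - s) ^ (α + β - 2))

noncomputable def GreenH (α γ : ℝ) (t s : ℝ) : ℝ :=
  (γ / Real.Gamma α) *
    (-(if s ≤ t then (t - s) ^ (α - 1) else 0)
      + ((α + 2) * t ^ (α + 1) - (α + 1) * t ^ (α + 2)) * (1 - s) ^ (α - 1)
      + (α - 1) * (t ^ (α + 2) - t ^ (α + 1)) * (1 - s) ^ (α - 2))

lemma greenG_continuous (α β : ℝ) (hα0 : 0 < α) (hβ2 : 2 < β) :
    Continuous (fun p : ℝ × ℝ => GreenG α β p.1 p.2) := by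
  -- The cut-off power is a power of the positive part, since the exponent is positive.
  have key : ∀ p : ℝ × ℝ, (if p.2 ≤ p.1 then (p.1 - p.2) ^ (α + β - 1) else 0)
      = (max (p.1 - p.2) 0) ^ (α + β - 1) := by
    intro p
    split_ifs with h
    · rw [max_eq_left (by linarith)]
    · rw [max_eq_right (by linarith), Real.zero_rpow (by linarith)]
  have hpow : ∀ (q : ℝ) (u : ℝ × ℝ → ℝ), 0 ≤ q → Continuous u →
      Continuous (fun p => u p ^ q) := fun q u hq hu => hu.rpow_const (fun _ => Or.inr hq)
  unfold GreenG
  simp only [key]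
  have h1 := hpow (α + β - 1) (fun p => max (p.1 - p.2) 0) (by linarith) (by fun_prop)
  have h2 := hpow (α + β - 1) (fun p => 1 - p.2) (by linarith) (by fun_prop)
  have h3 := hpow (α + β - 2) (fun p => 1 - p.2) (by linarith) (by fun_prop)
  have h4 := hpow (α + 2) (fun p => p.1) (by linarith) (by fun_prop)
  have h5 := hpow (α + 1) (fun p => p.1) (by linarith) (by fun_prop)
  fun_prop

lemma greenG_part (α β : ℝ) (hα0 : 0 < α) (hβ2 : 2 < β) (M : ℝ) (hM : 0 ≤ M) :
    ∀ ε > (0:ℝ), ∃ δ > (0:ℝ), ∀ F : ℝ → ℝ, ContinuousOn F (Icc 0 1) →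
      (∀ s ∈ Icc (0:ℝ) 1, |F s| ≤ M) →
      ∀ t₁ ∈ Icc (0:ℝ) 1, ∀ t₂ ∈ Icc (0:ℝ) 1, |t₂ - t₁| < δ →
        |(∫ s in (0:ℝ)..1, GreenG α β t₂ s * F s)
          - ∫ s in (0:ℝ)..1, GreenG α β t₁ s * F s| < ε := by
  intro ε hε
  have hG := greenG_continuous α β hα0 hβ2
  have hu : UniformContinuousOn (fun p : ℝ × ℝ => GreenG α β p.1 p.2)
      (Icc 0 1 ×ˢ Icc 0 1) :=
    (isCompact_Icc.prod isCompact_Icc).uniformContinuousOn_of_continuous hG.continuousOn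
  obtain ⟨δ, hδ, h⟩ := Metric.uniformContinuousOn_iff.1 hu (ε / (M + 1)) (by positivity)
  refine ⟨δ, hδ, fun F hF hFM t₁ ht₁ t₂ ht₂ ht => ?_⟩
  have hint : ∀ t, IntervalIntegrable (fun s => GreenG α β t s * F s)
      MeasureTheory.volume 0 1 := by
    intro t
    apply ContinuousOn.intervalIntegrable
    rw [uIcc_of_le zero_le_one]
    exact ContinuousOn.mul (Continuous.continuousOn
      (hG.comp (Continuous.prodMk continuous_const continuous_id))) hF
  rw [← integral_sub (hint t₂) (hint t₁)]
  have hb : ‖∫ s in (0:ℝ)..1, (GreenG α β t₂ s * F s - GreenG α β t₁ s * F s)‖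
      ≤ (ε / (M + 1) * M) * |1 - 0| := by
    apply norm_integral_le_of_norm_le_const
    intro s hs
    rw [uIoc_of_le zero_le_one] at hs
    have hs' : s ∈ Icc (0:ℝ) 1 := ⟨hs.1.le, hs.2⟩
    have hd := h (t₂, s) ⟨ht₂, hs'⟩ (t₁, s) ⟨ht₁, hs'⟩ (by
      simpa [Prod.dist_eq, Real.dist_eq, hδ] using ht)
    rw [Real.dist_eq] at hd
    rw [← sub_mul, norm_mul]
    exact mul_le_mul hd.le (hFM s hs') (norm_nonneg _) (by positivity)
  rw [Real.norm_eq_abs] at hb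
  refine hb.trans_lt ?_
  rw [sub_zero, abs_one, mul_one, div_mul_eq_mul_div, div_lt_iff₀ (by positivity)]
  nlinarith

lemma intervalIntegrable_one_sub_rpow (α : ℝ) (hα0 : 0 < α) :
    IntervalIntegrable (fun s : ℝ => (1 - s) ^ (α - 1)) MeasureTheory.volume 0 1 := by
  have := (intervalIntegrable_rpow' (a := 0) (b := 1) (r := α - 1)
    (by linarith)).comp_sub_left 1
  simpa using this.symm

lemma integral_one_sub_rpow (α : ℝ) (hα0 : 0 < α) :
    ∫ s in (0:ℝ)..1, (1 - s) ^ (α - 1) = 1 / α := by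
  rw [integral_comp_sub_left (fun s : ℝ => s ^ (α - 1)) 1, integral_rpow (Or.inl (by linarith))]
  simp [hα0.ne']

/-- Domination on `(0, 1)` by the integrable singularity `r (1 - s) ^ (α - 1)`, whose integral is
`r / α`. -/
lemma dominated_bound (α r : ℝ) (hα0 : 0 < α) (g : ℝ → ℝ)
    (hg : ContinuousOn g (Ioo 0 1))
    (hb : ∀ s ∈ Ioo (0:ℝ) 1, |g s| ≤ r * (1 - s) ^ (α - 1)) :
    IntervalIntegrable g MeasureTheory.volume 0 1 ∧ |∫ s in (0:ℝ)..1, g s| ≤ r / α := by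
  have hI := (intervalIntegrable_one_sub_rpow α hα0).const_mul r
  have hae : ∀ᵐ s ∂MeasureTheory.volume.restrict (Ioc (0:ℝ) 1),
      ‖g s‖ ≤ r * (1 - s) ^ (α - 1) := by
    rw [MeasureTheory.restrict_Ioo_eq_restrict_Ioc.symm]
    exact (MeasureTheory.ae_restrict_iff' measurableSet_Ioo).2 (Filter.Eventually.of_forall hb)
  constructor
  · rw [intervalIntegrable_iff_integrableOn_Ioc_of_le zero_le_one] at hI ⊢
    refine MeasureTheory.Integrable.mono' hI ?_ hae
    rw [MeasureTheory.restrict_Ioo_eq_restrict_Ioc.symm]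
    exact hg.aestronglyMeasurable measurableSet_Ioo
  · have h := norm_integral_le_of_norm_le zero_le_one
      ((MeasureTheory.ae_restrict_iff' measurableSet_Ioc).1 hae) hI
    rw [integral_const_mul, integral_one_sub_rpow α hα0] at h
    simpa [div_eq_mul_inv] using h

/-- The fractional integral as a convolution over a fixed interval: since `x 0 = 0`, the function
`v ↦ x (max v 0)` is a continuous extension of `x` by zero, which makes the range of
integration independent of `t`. -/
lemma fracIntegral_eq (α t : ℝ) (hα0 : 0 < α) (ht : t ∈ Icc (0:ℝ) 1) (x : ℝ → ℝ)
    (hx : ContinuousOn x (Icc 0 1)) (hx0 : x 0 = 0) :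
    IntervalIntegrable (fun s => (if s ≤ t then (t - s) ^ (α - 1) else 0) * x s)
      MeasureTheory.volume 0 1 ∧
    IntervalIntegrable (fun u => u ^ (α - 1) * x (max (t - u) 0)) MeasureTheory.volume 0 1 ∧
    ∫ s in (0:ℝ)..1, (if s ≤ t then (t - s) ^ (α - 1) else 0) * x s
      = ∫ u in (0:ℝ)..1, u ^ (α - 1) * x (max (t - u) 0) := by
  have hk : IntervalIntegrable (fun u : ℝ => u ^ (α - 1)) MeasureTheory.volume 0 1 :=
    intervalIntegrable_rpow' (by linarith)
  have hy : ContinuousOn (fun u => x (max (t - u) 0)) (Icc 0 1) := by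
    refine hx.comp (Continuous.continuousOn (by fun_prop)) fun u hu => ?_
    exact ⟨le_max_right _ _, max_le (by linarith [hu.1, ht.2]) zero_le_one⟩
  have hc : IntervalIntegrable (fun u => u ^ (α - 1) * x (max (t - u) 0))
      MeasureTheory.volume 0 1 := by
    apply hk.mul_continuousOn
    rwa [uIcc_of_le zero_le_one]
  have hc1 : IntervalIntegrable (fun u => u ^ (α - 1) * x (max (t - u) 0))
      MeasureTheory.volume 0 t := hc.mono_set (by
        rw [uIcc_of_le zero_le_one, uIcc_of_le ht.1]; exact Icc_subset_Icc_right ht.2)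
  have hc2 : IntervalIntegrable (fun u => u ^ (α - 1) * x (max (t - u) 0))
      MeasureTheory.volume t 1 := hc.mono_set (by
        rw [uIcc_of_le zero_le_one, uIcc_of_le ht.2]; exact Icc_subset_Icc_left ht.1)
  have hr := hc1.comp_sub_left t
  simp only [sub_zero, sub_self, sub_sub_cancel] at hr
  have e1 : EqOn (fun s => (t - s) ^ (α - 1) * x (max s 0))
      (fun s => (if s ≤ t then (t - s) ^ (α - 1) else 0) * x s) (uIoc 0 t) := by
    intro s hs
    rw [uIoc_of_le ht.1] at hs
    simp only [if_pos hs.2, max_eq_left hs.1.le]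
  have e2 : EqOn (fun _ => (0:ℝ))
      (fun s => (if s ≤ t then (t - s) ^ (α - 1) else 0) * x s) (uIoc t 1) := by
    intro s hs
    rw [uIoc_of_le ht.2] at hs
    simp only [if_neg (not_le.2 hs.1), zero_mul]
  have e3 : EqOn (fun _ => (0:ℝ))
      (fun u => u ^ (α - 1) * x (max (t - u) 0)) (uIoc t 1) := by
    intro s hs
    rw [uIoc_of_le ht.2] at hs
    simp only [max_eq_right (show t - s ≤ 0 by linarith [hs.1]), hx0, mul_zero]
  have i1 := (hr.symm).congr e1
  have i2 := (IntervalIntegrable.zero (μ := MeasureTheory.volume) (a := t) (b := 1)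
    (E := ℝ)).congr e2
  refine ⟨i1.trans i2, hc, ?_⟩
  rw [← integral_add_adjacent_intervals i1 i2, ← integral_add_adjacent_intervals hc1 hc2]
  have z : ∀ g : ℝ → ℝ, EqOn (fun _ => (0:ℝ)) g (uIoc t 1) → ∫ s in t..1, g s = 0 := by
    intro g hg
    rw [integral_congr_ae (Filter.Eventually.of_forall fun s hs => (hg hs).symm)]
    simp
  rw [z _ e2, z _ e3]
  rw [integral_congr_ae (Filter.Eventually.of_forall fun s hs => (e1 hs).symm)]
  have h := integral_comp_sub_left (a := 0) (b := t)
    (fun u => u ^ (α - 1) * x (max (t - u) 0)) t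
  simp only [sub_zero, sub_self, sub_sub_cancel] at h
  rw [h]

/-- The fractional integral of a Lipschitz function vanishing at `0` is Lipschitz. -/
lemma fracIntegral_lipschitz (α r : ℝ) (hα0 : 0 < α) (x : ℝ → ℝ)
    (hx0 : x 0 = 0)
    (hL : ∀ s ∈ Icc (0:ℝ) 1, ∀ t ∈ Icc (0:ℝ) 1, |x s - x t| ≤ r * |s - t|) (hr : 0 ≤ r)
    (hx : ContinuousOn x (Icc 0 1))
    (t₁ : ℝ) (ht₁ : t₁ ∈ Icc (0:ℝ) 1) (t₂ : ℝ) (ht₂ : t₂ ∈ Icc (0:ℝ) 1) :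
    |(∫ s in (0:ℝ)..1, (if s ≤ t₂ then (t₂ - s) ^ (α - 1) else 0) * x s)
      - ∫ s in (0:ℝ)..1, (if s ≤ t₁ then (t₁ - s) ^ (α - 1) else 0) * x s|
      ≤ r / α * |t₂ - t₁| := by
  obtain ⟨-, i1, e1⟩ := fracIntegral_eq α t₁ hα0 ht₁ x hx hx0
  obtain ⟨-, i2, e2⟩ := fracIntegral_eq α t₂ hα0 ht₂ x hx hx0
  rw [e1, e2, ← integral_sub i2 i1]
  have hk : IntervalIntegrable (fun u : ℝ => u ^ (α - 1)) MeasureTheory.volume 0 1 :=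
    intervalIntegrable_rpow' (by linarith)
  have h := norm_integral_le_of_norm_le (μ := MeasureTheory.volume) (f := fun u =>
      u ^ (α - 1) * x (max (t₂ - u) 0) - u ^ (α - 1) * x (max (t₁ - u) 0)) zero_le_one
    (Filter.Eventually.of_forall fun u hu => ?_) (hk.const_mul (r * |t₂ - t₁|))
  · rw [integral_const_mul, integral_rpow (Or.inl (by linarith)), Real.norm_eq_abs] at h
    refine h.trans (le_of_eq ?_)
    simp [hα0.ne']
    ring
  · have hm : ∀ t ∈ Icc (0:ℝ) 1, max (t - u) 0 ∈ Icc (0:ℝ) 1 := fun t ht =>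
      ⟨le_max_right _ _, max_le (by linarith [hu.1, ht.2]) zero_le_one⟩
    have h1 := hL _ (hm t₂ ht₂) _ (hm t₁ ht₁)
    have h2 : |max (t₂ - u) 0 - max (t₁ - u) 0| ≤ |t₂ - t₁| := by
      simpa using abs_max_sub_max_le_abs (t₂ - u) (t₁ - u) 0
    have hp : 0 ≤ u ^ (α - 1) := Real.rpow_nonneg hu.1.le _
    rw [← mul_sub, norm_mul, Real.norm_eq_abs, Real.norm_eq_abs, abs_of_nonneg hp, mul_comm]
    exact mul_le_mul_of_nonneg_right
      (h1.trans (mul_le_mul_of_nonneg_left h2 hr)) hp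

/-- The bound on the linear part of the operator. The coefficient of the nonintegrable kernel
`(1 - s) ^ (α - 2)` is finite because `x 1 = 0` gives `|x s| ≤ r (1 - s)`. -/
lemma greenH_bound (α γ r : ℝ) (hα0 : 0 < α) (hr : 0 ≤ r) (x : ℝ → ℝ)
    (hx0 : x 0 = 0) (hx1 : x 1 = 0)
    (hL : ∀ s ∈ Icc (0:ℝ) 1, ∀ t ∈ Icc (0:ℝ) 1, |x s - x t| ≤ r * |s - t|)
    (hx : ContinuousOn x (Icc 0 1))
    (t₁ : ℝ) (ht₁ : t₁ ∈ Icc (0:ℝ) 1) (t₂ : ℝ) (ht₂ : t₂ ∈ Icc (0:ℝ) 1) :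
    |(∫ s in (0:ℝ)..1, GreenH α γ t₂ s * x s) - ∫ s in (0:ℝ)..1, GreenH α γ t₁ s * x s|
      ≤ |γ / Real.Gamma α| * (r / α) * (|t₂ - t₁|
        + |((α + 2) * t₂ ^ (α + 1) - (α + 1) * t₂ ^ (α + 2))
            - ((α + 2) * t₁ ^ (α + 1) - (α + 1) * t₁ ^ (α + 2))|
        + |(α - 1) * (t₂ ^ (α + 2) - t₂ ^ (α + 1))
            - (α - 1) * (t₁ ^ (α + 2) - t₁ ^ (α + 1))|) := by
  have hxb : ∀ s ∈ Ioo (0:ℝ) 1, |x s| ≤ r * (1 - s) := by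
    intro s hs
    have := hL s ⟨hs.1.le, hs.2.le⟩ 1 ⟨zero_le_one, le_rfl⟩
    rwa [hx1, sub_zero, abs_sub_comm s 1,
      abs_of_pos (show 0 < 1 - s by linarith [hs.2])] at this
  have hcont : ∀ q : ℝ, ContinuousOn (fun s => (1 - s) ^ q * x s) (Ioo 0 1) := by
    intro q
    refine ContinuousOn.mul (ContinuousOn.rpow_const (by fun_prop) fun s hs => Or.inl ?_)
      (hx.mono Ioo_subset_Icc_self)
    linarith [hs.2]
  obtain ⟨i1, b1⟩ := dominated_bound α r hα0 (fun s => (1 - s) ^ (α - 1) * x s) (hcont _) (by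
    intro s hs
    have hp : 0 ≤ (1 - s) ^ (α - 1) := Real.rpow_nonneg (by linarith [hs.2]) _
    rw [abs_mul, abs_of_nonneg hp, mul_comm]
    refine mul_le_mul_of_nonneg_right ((hxb s hs).trans ?_) hp
    nlinarith [hs.1, hs.2])
  obtain ⟨i2, b2⟩ := dominated_bound α r hα0 (fun s => (1 - s) ^ (α - 2) * x s) (hcont _) (by
    intro s hs
    have h1s : 0 < 1 - s := by linarith [hs.2]
    have hp : 0 ≤ (1 - s) ^ (α - 2) := Real.rpow_nonneg h1s.le _
    have he : (1 - s) ^ (α - 1) = (1 - s) ^ (α - 2) * (1 - s) := by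
      rw [← Real.rpow_add_one h1s.ne']
      ring_nf
    rw [abs_mul, abs_of_nonneg hp, he]
    calc (1 - s) ^ (α - 2) * |x s| ≤ (1 - s) ^ (α - 2) * (r * (1 - s)) :=
          mul_le_mul_of_nonneg_left (hxb s hs) hp
      _ = _ := by ring)
  have hsplit : ∀ t ∈ Icc (0:ℝ) 1, ∫ s in (0:ℝ)..1, GreenH α γ t s * x s
      = (γ / Real.Gamma α) *
        (-(∫ s in (0:ℝ)..1, (if s ≤ t then (t - s) ^ (α - 1) else 0) * x s)
        + ((α + 2) * t ^ (α + 1) - (α + 1) * t ^ (α + 2))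
            * (∫ s in (0:ℝ)..1, (1 - s) ^ (α - 1) * x s)
        + ((α - 1) * (t ^ (α + 2) - t ^ (α + 1)))
            * ∫ s in (0:ℝ)..1, (1 - s) ^ (α - 2) * x s) := by
    intro t ht
    have i0 := (fracIntegral_eq α t hα0 ht x hx hx0).1
    have i0n : IntervalIntegrable (fun s => -((if s ≤ t then (t - s) ^ (α - 1) else 0) * x s))
        MeasureTheory.volume 0 1 := i0.neg
    rw [← integral_neg, ← integral_const_mul, ← integral_const_mul,
      ← integral_add i0n (i1.const_mul _),
      ← integral_add (i0n.add (i1.const_mul _)) (i2.const_mul _), ← integral_const_mul]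
    congr 1
    funext s
    unfold GreenH
    ring
  have hI := fracIntegral_lipschitz α r hα0 x hx0 hL hr hx t₁ ht₁ t₂ ht₂
  rw [hsplit t₁ ht₁, hsplit t₂ ht₂, ← mul_sub, abs_mul, mul_assoc |γ / Real.Gamma α|]
  refine mul_le_mul_of_nonneg_left ?_ (abs_nonneg _)
  generalize (∫ s in (0:ℝ)..1, (if s ≤ t₂ then (t₂ - s) ^ (α - 1) else 0) * x s) = I₂ at *
  generalize (∫ s in (0:ℝ)..1, (if s ≤ t₁ then (t₁ - s) ^ (α - 1) else 0) * x s) = I₁ at *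
  generalize (∫ s in (0:ℝ)..1, (1 - s) ^ (α - 1) * x s) = d₁ at *
  generalize (∫ s in (0:ℝ)..1, (1 - s) ^ (α - 2) * x s) = d₂ at *
  generalize (α + 2) * t₂ ^ (α + 1) - (α + 1) * t₂ ^ (α + 2) = C₂
  generalize (α + 2) * t₁ ^ (α + 1) - (α + 1) * t₁ ^ (α + 2) = C₁
  generalize (α - 1) * (t₂ ^ (α + 2) - t₂ ^ (α + 1)) = D₂
  generalize (α - 1) * (t₁ ^ (α + 2) - t₁ ^ (α + 1)) = D₁
  have e : -I₂ + C₂ * d₁ + D₂ * d₂ - (-I₁ + C₁ * d₁ + D₁ * d₂)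
      = -(I₂ - I₁) + (C₂ - C₁) * d₁ + (D₂ - D₁) * d₂ := by ring
  rw [e]
  refine (abs_add_three _ _ _).trans ?_
  rw [abs_neg, abs_mul, abs_mul]
  have h1 := mul_le_mul_of_nonneg_left b1 (abs_nonneg (C₂ - C₁))
  have h2 := mul_le_mul_of_nonneg_left b2 (abs_nonneg (D₂ - D₁))
  nlinarith

lemma greenH_part (α γ r : ℝ) (hα0 : 0 < α) (hr : 0 ≤ r) :
    ∀ ε > (0:ℝ), ∃ δ > (0:ℝ), ∀ x : ℝ → ℝ, ContinuousOn x (Icc 0 1) → x 0 = 0 → x 1 = 0 →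
      (∀ s ∈ Icc (0:ℝ) 1, ∀ t ∈ Icc (0:ℝ) 1, |x s - x t| ≤ r * |s - t|) →
      ∀ t₁ ∈ Icc (0:ℝ) 1, ∀ t₂ ∈ Icc (0:ℝ) 1, |t₂ - t₁| < δ →
        |(∫ s in (0:ℝ)..1, GreenH α γ t₂ s * x s)
          - ∫ s in (0:ℝ)..1, GreenH α γ t₁ s * x s| < ε := by
  intro ε hε
  set K := |γ / Real.Gamma α| * (r / α) with hK
  have hK0 : 0 ≤ K := by positivity
  have hη : 0 < ε / (3 * (K + 1)) := by positivity
  have hp : ∀ q : ℝ, 0 ≤ q → Continuous (fun t : ℝ => t ^ q) :=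
    fun q hq => Real.continuous_rpow_const hq
  have hp1 := hp (α + 1) (by linarith)
  have hp2 := hp (α + 2) (by linarith)
  have huc : ∀ φ : ℝ → ℝ, Continuous φ → ∃ δ > (0:ℝ), ∀ t₂ ∈ Icc (0:ℝ) 1, ∀ t₁ ∈ Icc (0:ℝ) 1,
      |t₂ - t₁| < δ → |φ t₂ - φ t₁| < ε / (3 * (K + 1)) := fun φ hφ =>
    Metric.uniformContinuousOn_iff.1
      (isCompact_Icc.uniformContinuousOn_of_continuous hφ.continuousOn) _ hη
  obtain ⟨δ₁, hδ₁, h₁⟩ := huc (fun t => (α + 2) * t ^ (α + 1) - (α + 1) * t ^ (α + 2))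
    (by fun_prop)
  obtain ⟨δ₂, hδ₂, h₂⟩ := huc (fun t => (α - 1) * (t ^ (α + 2) - t ^ (α + 1)))
    (by fun_prop)
  refine ⟨min (ε / (3 * (K + 1))) (min δ₁ δ₂), by positivity,
    fun x hx hx0 hx1 hL t₁ ht₁ t₂ ht₂ ht => ?_⟩
  rw [lt_min_iff, lt_min_iff] at ht
  have hb := greenH_bound α γ r hα0 hr x hx0 hx1 hL hx t₁ ht₁ t₂ ht₂
  have hC := h₁ t₂ ht₂ t₁ ht₁ ht.2.1
  have hD := h₂ t₂ ht₂ t₁ ht₁ ht.2.2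
  refine hb.trans_lt ?_
  rw [← hK]
  calc K * _ ≤ K * (3 * (ε / (3 * (K + 1)))) := by
        refine mul_le_mul_of_nonneg_left ?_ hK0
        linarith [ht.1]
    _ = K * ε / (K + 1) := by field_simp
    _ < ε := by
        rw [div_lt_iff₀ (by positivity)]
        linarith

theorem operator_equicontinuous (α β γ : ℝ) (hα0 : 0 < α) (hα1 : α ≤ 1)
    (hβ2 : 2 < β) (hβ3 : β ≤ 3) (f : ℝ → ℝ → ℝ → ℝ)
    (hf : ContinuousOn (fun p : ℝ × ℝ × ℝ => f p.1 p.2.1 p.2.2)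
      (Set.Icc 0 1 ×ˢ (Set.univ : Set (ℝ × ℝ))))
    (r : ℝ) (hr : 0 < r) :
    ∀ ε > (0:ℝ), ∃ δ > (0:ℝ),
      ∀ x x' : ℝ → ℝ,
        (∀ t ∈ Set.Icc (0:ℝ) 1, HasDerivWithinAt x (x' t) (Set.Icc (0:ℝ) 1) t) →
        ContinuousOn x' (Set.Icc 0 1) → x 0 = 0 → x 1 = 0 →
        (⨆ t : Set.Icc (0:ℝ) 1, |x t|) + (⨆ t : Set.Icc (0:ℝ) 1, |x' t|) ≤ r →
        ∀ t₁ ∈ Set.Icc (0:ℝ) 1, ∀ t₂ ∈ Set.Icc (0:ℝ) 1, |t₂ - t₁| < δ →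
          |((∫ s in (0:ℝ)..1, GreenG α β t₂ s * f s (x s) (x' s))
              + ∫ s in (0:ℝ)..1, GreenH α γ t₂ s * x s)
            - ((∫ s in (0:ℝ)..1, GreenG α β t₁ s * f s (x s) (x' s))
              + ∫ s in (0:ℝ)..1, GreenH α γ t₁ s * x s)| < ε := by
  intro ε hε
  obtain ⟨M, hM⟩ := IsCompact.exists_bound_of_continuousOn
    (isCompact_Icc.prod (isCompact_Icc.prod isCompact_Icc))
    (hf.mono (show Icc (0:ℝ) 1 ×ˢ (Icc (-r) r ×ˢ Icc (-r) r) ⊆ Icc 0 1 ×ˢ univ from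
      prod_mono_right (subset_univ _)))
  obtain ⟨δ₁, hδ₁, hG⟩ := greenG_part α β hα0 hβ2 (max M 0) (le_max_right _ _) (ε / 2)
    (by positivity)
  obtain ⟨δ₂, hδ₂, hH⟩ := greenH_part α γ r hα0 hr.le (ε / 2) (by positivity)
  refine ⟨min δ₁ δ₂, by positivity, fun x x' hd hx' hx0 hx1 hn t₁ ht₁ t₂ ht₂ ht => ?_⟩
  rw [lt_min_iff] at ht
  have hx : ContinuousOn x (Icc 0 1) := fun t h => (hd t h).continuousWithinAt
  have hsup : ∀ g : ℝ → ℝ, ContinuousOn g (Icc 0 1) → ∀ t ∈ Icc (0:ℝ) 1,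
      |g t| ≤ ⨆ t : Icc (0:ℝ) 1, |g t| := by
    intro g hg t ht
    obtain ⟨B, hB⟩ := isCompact_Icc.exists_bound_of_continuousOn hg
    exact le_ciSup (f := fun t : Icc (0:ℝ) 1 => |g t|)
      ⟨B, by rintro _ ⟨u, rfl⟩; exact hB u u.2⟩ ⟨t, ht⟩
  have hpos : ∀ g : ℝ → ℝ, 0 ≤ ⨆ t : Icc (0:ℝ) 1, |g t| := fun g =>
    Real.iSup_nonneg fun _ => abs_nonneg _
  have hxr : ∀ t ∈ Icc (0:ℝ) 1, |x t| ≤ r := fun t ht => by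
    linarith [hsup x hx t ht, hpos x']
  have hxr' : ∀ t ∈ Icc (0:ℝ) 1, |x' t| ≤ r := fun t ht => by
    linarith [hsup x' hx' t ht, hpos x]
  have hL : ∀ s ∈ Icc (0:ℝ) 1, ∀ t ∈ Icc (0:ℝ) 1, |x s - x t| ≤ r * |s - t| :=
    fun s hs t ht => (convex_Icc (0:ℝ) 1).norm_image_sub_le_of_norm_hasDerivWithin_le
      hd hxr' ht hs
  have hF : ContinuousOn (fun s => f s (x s) (x' s)) (Icc 0 1) :=
    hf.comp (f := fun s => (s, x s, x' s)) (continuousOn_id.prodMk (hx.prodMk hx'))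
      fun s hs => ⟨hs, mem_univ _⟩
  have hFM : ∀ s ∈ Icc (0:ℝ) 1, |f s (x s) (x' s)| ≤ max M 0 := fun s hs =>
    (hM (s, x s, x' s) ⟨hs, abs_le.1 (hxr s hs), abs_le.1 (hxr' s hs)⟩).trans (le_max_left _ _)
  have h1 := hG _ hF hFM t₁ ht₁ t₂ ht₂ ht.1
  have h2 := hH x hx hx0 hx1 hL t₁ ht₁ t₂ ht₂ ht.2
  rw [add_sub_add_comm]
  exact (abs_add_le _ _).trans_lt (by linarith)
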